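/- arXiv:2203.00098 — 3 statements merged into one kernel-verified Lean document; each statement's English description precedes it below -/
import Mathlib

section
/- Let p ≥ 5 be odd and let k₁, …, k_p be integers with k := k₁ − k₂ + ⋯ + k_p and Φ := k² − k₁² + k₂² − ⋯ − k_p². Assume |k₁| ≥ |k_i| for all i, that k ≠ k₁, and that (p−1)(k₂* + (k₂*)²) ≤ |k₁|. Then |Φ| ≥ |k₁|. -/
open scoped BigOperators

/-!
Let `a` be the dominant frequency and split off its contribution: `k = a + m` and
`Φ = (k² - a²) - S`, with `m` and `S` the alternating sums of the other frequencies and of their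
squares. Since `m` is a nonzero integer, `|k² - a²| = |m| |2a + m| ≥ 2|a| - |m|`, whence
`|Φ| ≥ 2|a| - (|m| + |S|)`. The triangle inequality gives
`|m| + |S| ≤ (p - 1) (k₂* + k₂*²) ≤ |a|`.
-/

section CommRing

variable {ι R : Type*} [Fintype ι] [CommRing R]

/-- The resonance function `Φ = k² - ∑ ε_j κ_j²`, `k = ∑ ε_j κ_j`, of the frequencies `κ`. The
alternating signs of the classical case are replaced by arbitrary coefficients `ε`. -/
def resonance (ε κ : ι → R) : R :=
  (∑ j, ε j * κ j) ^ 2 - ∑ j, ε j * κ j ^ 2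

theorem resonance_eq_sq_sub_sq_sub_sum_erase [DecidableEq ι] {ε : ι → R} {i : ι} (hε : ε i = 1)
    (κ : ι → R) :
    resonance ε κ =
      ((∑ j, ε j * κ j) ^ 2 - κ i ^ 2) - ∑ j ∈ Finset.univ.erase i, ε j * κ j ^ 2 := by
  rw [resonance, Finset.sum_erase_eq_sub (Finset.mem_univ i), hε]
  ring

end CommRing

section LinearOrder

variable {ι R : Type*} [CommRing R] [LinearOrder R] [IsStrictOrderedRing R]

theorem two_mul_abs_sub_abs_sub_le_abs_sq_sub_sq {x a : R} (h : 1 ≤ |x - a|) :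
    2 * |a| - |x - a| ≤ |x ^ 2 - a ^ 2| :=
  calc
    2 * |a| - |x - a| = |2 * a| - |x - a| := by rw [abs_mul, abs_two]
    _ ≤ |2 * a + (x - a)| := abs_sub_abs_le_abs_add _ _
    _ = |x + a| := by ring_nf
    _ ≤ |x + a| * |x - a| := le_mul_of_one_le_right (abs_nonneg _) h
    _ = |x ^ 2 - a ^ 2| := by rw [sq_sub_sq, abs_mul]

theorem abs_sum_mul_le_card_mul {s : Finset ι} {c f : ι → R} {B : R}
    (hc : ∀ j ∈ s, |c j| ≤ 1) (hf : ∀ j ∈ s, |f j| ≤ B) :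
    |∑ j ∈ s, c j * f j| ≤ s.card * B :=
  calc
    |∑ j ∈ s, c j * f j| ≤ ∑ j ∈ s, |c j * f j| := Finset.abs_sum_le_sum_abs _ _
    _ ≤ s.card • B := Finset.sum_le_card_nsmul _ _ _ fun j hj => by
      rw [abs_mul]
      exact (mul_le_of_le_one_left (abs_nonneg _) (hc j hj)).trans (hf j hj)
    _ = s.card * B := nsmul_eq_mul _ _

theorem abs_sum_mul_add_abs_sum_mul_sq_le {s : Finset ι} {c f : ι → R} {B : R}
    (hc : ∀ j ∈ s, |c j| ≤ 1) (hf : ∀ j ∈ s, |f j| ≤ B) :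
    |∑ j ∈ s, c j * f j| + |∑ j ∈ s, c j * f j ^ 2| ≤ s.card * (B + B ^ 2) := by
  have hf_sq : ∀ j ∈ s, |f j ^ 2| ≤ B ^ 2 := fun j hj => by
    rw [abs_pow]
    exact pow_le_pow_left₀ (abs_nonneg _) (hf j hj) 2
  rw [mul_add]
  exact add_le_add (abs_sum_mul_le_card_mul hc hf) (abs_sum_mul_le_card_mul hc hf_sq)

theorem stmt2_general [Fintype ι] {ε κ : ι → R} {i : ι} {B : R}
    (hε : ∀ j, j ≠ i → |ε j| ≤ 1) (hεi : ε i = 1) (hB : ∀ j, j ≠ i → |κ j| ≤ B)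
    (hgap : 1 ≤ |∑ j, ε j * κ j - κ i|)
    (hsmall : ((Fintype.card ι : R) - 1) * (B + B ^ 2) ≤ |κ i|) :
    |κ i| ≤ |resonance ε κ| := by
  classical
  set s := Finset.univ.erase i
  set k := ∑ j, ε j * κ j
  set S := ∑ j ∈ s, ε j * κ j ^ 2
  have hcard : (s.card : R) = Fintype.card ι - 1 :=
    Finset.cast_card_erase_of_mem (Finset.mem_univ i)
  have hsum : ∑ j ∈ s, ε j * κ j = k - κ i := by
    rw [Finset.sum_erase_eq_sub (Finset.mem_univ i), hεi, one_mul]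
  have hrest : |k - κ i| + |S| ≤ |κ i| := by
    rw [← hsum]
    refine (abs_sum_mul_add_abs_sum_mul_sq_le ?_ ?_).trans (hcard ▸ hsmall)
    · exact fun j hj => hε j (Finset.ne_of_mem_erase hj)
    · exact fun j hj => hB j (Finset.ne_of_mem_erase hj)
  calc
    |κ i| ≤ 2 * |κ i| - |k - κ i| - |S| := by linarith
    _ ≤ |k ^ 2 - κ i ^ 2| - |S| :=
      sub_le_sub_right (two_mul_abs_sub_abs_sub_le_abs_sq_sub_sq hgap) _
    _ ≤ |k ^ 2 - κ i ^ 2 - S| := abs_sub_abs_le_abs_sub _ _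
    _ = |resonance ε κ| := by rw [resonance_eq_sq_sub_sq_sub_sum_erase hεi]

end LinearOrder

/-- Case B of the resonant decomposition: if `|k₁|` is the largest frequency, the
configuration is nonresonant in the sense `k ≠ k₁`, and the second largest frequency `k₂*`
satisfies `(p−1)(k₂* + (k₂*)²) ≤ |k₁|`, then `|Φ| ≥ |k₁|`.  Here `k₂*` is pinned down as
the maximum of `|κ i|` over `i ≠ 0` (an upper bound that is attained). -/
theorem stmt2 (p : ℕ) (hp : Odd p) (hp5 : 5 ≤ p)
    (κ : Fin p → ℤ) (k2 : ℤ)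
    (hmax : ∀ i, |κ i| ≤ |κ ⟨0, by omega⟩|)
    (hk2ub : ∀ i, i ≠ (⟨0, by omega⟩ : Fin p) → |κ i| ≤ k2)
    (hk2mem : ∃ i, i ≠ (⟨0, by omega⟩ : Fin p) ∧ |κ i| = k2)
    (hne : (∑ j : Fin p, (-1:ℤ)^(j:ℕ) * κ j) ≠ κ ⟨0, by omega⟩)
    (hsmall : ((p:ℤ) - 1) * (k2 + k2^2) ≤ |κ ⟨0, by omega⟩|) :
    |κ ⟨0, by omega⟩| ≤
      |(∑ j : Fin p, (-1:ℤ)^(j:ℕ) * κ j)^2 - ∑ j : Fin p, (-1:ℤ)^(j:ℕ) * (κ j)^2| :=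
  stmt2_general (ε := fun j : Fin p => (-1) ^ (j : ℕ)) (fun j _ => by simp) (pow_zero _) hk2ub
    (Int.one_le_abs (sub_ne_zero.mpr hne)) (by simpa only [Fintype.card_fin] using hsmall)
end

section
/- Let p ≥ 5 be odd, s > (p−3)/(2(p−1)), and 0 < ε < min((p−1)s − (p−3)/2, 1). For k ∈ ℤ let S_k denote the set of tuples (k₁,…,k_p) ∈ ℤ^p with k = k₁ − k₂ + ⋯ + k_p, |k₁| ≥ 2p · max_{2≤i≤p}|k_i|, and |Φ| ≥ max(|k|,1), where Φ := k² − k₁² + k₂² − ⋯ − k_p². Then sup_{k∈ℤ} Σ_{(k₁,…,k_p)∈S_k} ⟨k⟩^{2s+2ε} / ( Φ² · ∏_{i=1}^p ⟨k_i⟩^{2s} ) < ∞, with a bound depending only on p, s, ε. -/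
open scoped BigOperators

/-- The alternating sum `k₁ − k₂ + k₃ − ⋯ + k_p` (Fin index `j` ↔ paper index `j+1`). -/
def altSum (p : ℕ) (κ : Fin p → ℤ) : ℤ := ∑ j : Fin p, (-1:ℤ)^(j:ℕ) * κ j

/-- The alternating sum of squares `k₁² − k₂² + ⋯ + k_p²`, so that
`Φ = k² − altSq` for `k = altSum`. -/
def altSq (p : ℕ) (κ : Fin p → ℤ) : ℤ := ∑ j : Fin p, (-1:ℤ)^(j:ℕ) * (κ j)^2

/-- The nonresonant region with one dominant odd-indexed frequency:
`k = k₁ − k₂ + ⋯ + k_p`, `|k₁| ≥ 2p·max_{2 ≤ i ≤ p}|k_i|` and `|Φ| ≥ max(|k|, 1)`. -/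
def NRSet (p : ℕ) (hp : 0 < p) (k : ℤ) : Set (Fin p → ℤ) :=
  {κ | altSum p κ = k ∧ (∀ i, i ≠ (⟨0, hp⟩ : Fin p) → 2 * (p:ℤ) * |κ i| ≤ |κ ⟨0, hp⟩|)
      ∧ max |k| 1 ≤ |k^2 - altSq p κ|}

/-! On the nonresonant region the dominant frequency satisfies `⟨k₁⟩ ~ ⟨k⟩`, since the other ones
together contribute at most half of `|k₁|` to the alternating sum, and `⟨k⟩² ≤ 2Φ²`. The summand is
therefore `≲ ⟨k⟩^{2ε-2} ∏_{i ≥ 2} ⟨k_i⟩^{-2s}`. As `k₁` is determined by `k` and the remaining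
frequencies, which lie in `[-|k|, |k|]`, the sum is
`≲ ⟨k⟩^{2ε-2} (∑_{|y| ≤ |k|} ⟨y⟩^{-2s})^{p-1}`. The inner sum is `≲ ⟨k⟩^{2b}` for every `b > 0` with
`b ≥ 1/2 - s`, and the hypothesis on `ε` leaves room for such a `b` with `(p - 1) b ≤ 1 - ε`.
-/

lemma rpow_le_rpow_abs_mul_rpow {x y c : ℝ} (hx : 0 < x) (hy : 0 < y) (hc : 0 < c)
    (hxy : x ≤ c * y) (hyx : y ≤ c * x) (r : ℝ) : x ^ r ≤ c ^ |r| * y ^ r := by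
  rcases le_total 0 r with hr | hr
  · rw [abs_of_nonneg hr, ← Real.mul_rpow hc.le hy.le]
    exact Real.rpow_le_rpow hx.le hxy hr
  · rw [abs_of_nonpos hr, Real.rpow_neg hc.le, ← div_eq_inv_mul, le_div_iff₀' (by positivity),
      ← Real.mul_rpow hc.le hx.le]
    exact Real.rpow_le_rpow_of_nonpos hy hyx hr

lemma mul_rpow_sub_one_mul_sub_le_rpow_sub_rpow {x y b : ℝ} (hx : 0 ≤ x) (hy : 0 < y)
    (hb0 : 0 ≤ b) (hb1 : b ≤ 1) : b * y ^ (b - 1) * (y - x) ≤ y ^ b - x ^ b := by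
  have bernoulli : (1 + (x / y - 1)) ^ b ≤ 1 + b * (x / y - 1) :=
    rpow_one_add_le_one_add_mul_self (by linarith [div_nonneg hx hy.le]) hb0 hb1
  rw [add_sub_cancel, Real.div_rpow hx hy.le, div_le_iff₀ (by positivity)] at bernoulli
  have expand : (1 + b * (x / y - 1)) * y ^ b = y ^ b - b * y ^ (b - 1) * (y - x) := by
    rw [Real.rpow_sub_one hy.ne']
    field_simp
    ring
  linarith

-- The factor 2 counts the endpoints `±(N + 1)` by which a symmetric sum grows: this telescopes.
lemma two_mul_one_add_sq_rpow_le_sub {b : ℝ} (hb0 : 0 < b) (hb1 : b ≤ 1) (N : ℕ) :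
    2 * (1 + ((N : ℝ) + 1) ^ 2) ^ (b - 1 / 2) ≤
      4 / b * ((1 + ((N : ℝ) + 1) ^ 2) ^ b - (1 + (N : ℝ) ^ 2) ^ b) := by
  set x : ℝ := 1 + (N : ℝ) ^ 2
  set y : ℝ := 1 + ((N : ℝ) + 1) ^ 2
  have hx0 : 0 < x := by positivity
  have hy0 : 0 < y := by positivity
  have sqrt_le : √y ≤ 2 * (y - x) := by
    have : (0 : ℝ) ≤ N := N.cast_nonneg
    rw [Real.sqrt_le_iff]
    constructor <;> simp only [x, y] <;> nlinarith
  calc 2 * y ^ (b - 1 / 2) = 2 * (y ^ (b - 1) * √y) := by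
        rw [Real.sqrt_eq_rpow, ← Real.rpow_add hy0]
        ring_nf
    _ ≤ 2 * (y ^ (b - 1) * (2 * (y - x))) := by gcongr
    _ = 4 / b * (b * y ^ (b - 1) * (y - x)) := by
        field_simp
        ring
    _ ≤ 4 / b * (y ^ b - x ^ b) := by
        gcongr
        exact mul_rpow_sub_one_mul_sub_le_rpow_sub_rpow hx0.le hy0 hb0.le hb1

lemma sum_Icc_one_add_sq_rpow_sub_half_le {b : ℝ} (hb0 : 0 < b) (hb1 : b ≤ 1) (N : ℕ) :
    ∑ y ∈ Finset.Icc (-N : ℤ) N, (1 + (y : ℝ) ^ 2) ^ (b - 1 / 2) ≤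
      4 / b * (1 + (N : ℝ) ^ 2) ^ b := by
  induction N with
  | zero =>
    have : 1 ≤ 4 / b := by rw [le_div_iff₀ hb0]; linarith
    simpa using this
  | succ N ih =>
    rw [Nat.cast_succ, Finset.sum_Icc_succ_eq_add_endpoints]
    push_cast
    rw [neg_sq]
    linarith [two_mul_one_add_sq_rpow_le_sub hb0 hb1 N]

lemma sum_Icc_one_add_sq_rpow_le {b r : ℝ} (hb : 0 < b) (hr : r ≤ b - 1 / 2) (k : ℤ) :
    ∑ y ∈ Finset.Icc (-|k|) |k|, (1 + (y : ℝ) ^ 2) ^ r ≤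
      4 / min b 1 * (1 + (k : ℝ) ^ 2) ^ b := by
  set c := min b 1
  have hc : 0 < c := lt_min hb one_pos
  have hcb : 0 ≤ b - c := sub_nonneg.2 (min_le_left b 1)
  have term_le (y : ℤ) (hy : y ∈ Finset.Icc (-|k|) |k|) :
      (1 + (y : ℝ) ^ 2) ^ r ≤ (1 + (k : ℝ) ^ 2) ^ (b - c) * (1 + (y : ℝ) ^ 2) ^ (c - 1 / 2) := by
    have hyk : (y : ℝ) ^ 2 ≤ (k : ℝ) ^ 2 := by
      exact_mod_cast sq_le_sq.2 (abs_le.2 (Finset.mem_Icc.1 hy))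
    calc (1 + (y : ℝ) ^ 2) ^ r ≤ (1 + (y : ℝ) ^ 2) ^ ((b - c) + (c - 1 / 2)) :=
          Real.rpow_le_rpow_of_exponent_le (by nlinarith) (by linarith)
      _ = (1 + (y : ℝ) ^ 2) ^ (b - c) * (1 + (y : ℝ) ^ 2) ^ (c - 1 / 2) :=
          Real.rpow_add (by positivity) _ _
      _ ≤ (1 + (k : ℝ) ^ 2) ^ (b - c) * (1 + (y : ℝ) ^ 2) ^ (c - 1 / 2) := by gcongr
  have half_sum_le : ∑ y ∈ Finset.Icc (-|k|) |k|, (1 + (y : ℝ) ^ 2) ^ (c - 1 / 2) ≤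
      4 / c * (1 + (k : ℝ) ^ 2) ^ c := by
    have := sum_Icc_one_add_sq_rpow_sub_half_le hc (min_le_right b 1) k.natAbs
    rwa [Int.natCast_natAbs, Nat.cast_natAbs, Int.cast_abs, sq_abs] at this
  calc ∑ y ∈ Finset.Icc (-|k|) |k|, (1 + (y : ℝ) ^ 2) ^ r
      ≤ (1 + (k : ℝ) ^ 2) ^ (b - c) *
          ∑ y ∈ Finset.Icc (-|k|) |k|, (1 + (y : ℝ) ^ 2) ^ (c - 1 / 2) := by
        rw [Finset.mul_sum]
        exact Finset.sum_le_sum term_le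
    _ ≤ (1 + (k : ℝ) ^ 2) ^ (b - c) * (4 / c * (1 + (k : ℝ) ^ 2) ^ c) := by gcongr
    _ = 4 / c * (1 + (k : ℝ) ^ 2) ^ b := by
        rw [mul_left_comm, ← Real.rpow_add (by positivity), sub_add_cancel]

lemma tsum_le_sum_of_injOn {α β : Type*} {S : Set α} {T : Finset β} {e : α → β} {f : α → ℝ}
    {g : β → ℝ} (hmaps : Set.MapsTo e S T) (hinj : Set.InjOn e S) (hg : ∀ b ∈ T, 0 ≤ g b)
    (hfg : ∀ a ∈ S, f a ≤ g (e a)) : ∑' a : S, f a ≤ ∑ b ∈ T, g b := by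
  classical
  lift S to Finset α using Set.Finite.of_injOn hmaps hinj T.finite_toSet
  calc ∑' a : (S : Set α), f a = ∑ a ∈ S, f a := Finset.tsum_subtype' S f
    _ ≤ ∑ a ∈ S, g (e a) := Finset.sum_le_sum hfg
    _ = ∑ b ∈ S.image e, g b := (Finset.sum_image hinj).symm
    _ ≤ ∑ b ∈ T, g b :=
        Finset.sum_le_sum_of_subset_of_nonneg (Finset.image_subset_iff.2 hmaps)
          fun b hb _ => hg b hb

lemma altSum_succ {n : ℕ} (κ : Fin (n + 1) → ℤ) :
    altSum (n + 1) κ = κ 0 - altSum n (Fin.tail κ) := by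
  simp [altSum, Fin.sum_univ_succ, Fin.tail, pow_succ, sub_eq_add_neg]

lemma abs_altSum_le (p : ℕ) (κ : Fin p → ℤ) : |altSum p κ| ≤ ∑ j, |κ j| := by
  simpa [altSum, abs_mul] using
    Finset.abs_sum_le_sum_abs (fun j : Fin p => (-1 : ℤ) ^ (j : ℕ) * κ j) Finset.univ

namespace NRSet

lemma one_add_sq_le_two_mul_sq {p : ℕ} {hp : 0 < p} {k : ℤ} {κ : Fin p → ℤ}
    (hκ : κ ∈ NRSet p hp k) : 1 + k ^ 2 ≤ 2 * (k ^ 2 - altSq p κ) ^ 2 := by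
  obtain ⟨hkΦ, h1Φ⟩ := max_le_iff.1 hκ.2.2
  have k_sq_le := sq_le_sq.2 hkΦ
  have one_le := (one_le_sq_iff_one_le_abs _).2 h1Φ
  linarith

variable {n : ℕ} {k : ℤ} {κ : Fin (n + 1) → ℤ}

lemma two_mul_succ_mul_abs_tail_le (hκ : κ ∈ NRSet (n + 1) n.succ_pos k) (i : Fin n) :
    2 * ((n : ℤ) + 1) * |Fin.tail κ i| ≤ |κ 0| := by
  simpa [Fin.tail] using hκ.2.1 i.succ (Fin.succ_ne_zero i)

lemma two_mul_abs_altSum_tail_le (hκ : κ ∈ NRSet (n + 1) n.succ_pos k) :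
    2 * |altSum n (Fin.tail κ)| ≤ |κ 0| := by
  have scaled : ((n : ℤ) + 1) * (2 * |altSum n (Fin.tail κ)|) ≤ ((n : ℤ) + 1) * |κ 0| :=
    calc ((n : ℤ) + 1) * (2 * |altSum n (Fin.tail κ)|)
        ≤ ((n : ℤ) + 1) * (2 * ∑ i, |Fin.tail κ i|) := by
          gcongr
          exact abs_altSum_le n (Fin.tail κ)
      _ = ∑ i, 2 * ((n : ℤ) + 1) * |Fin.tail κ i| := by
          rw [← Finset.mul_sum]
          ring
      _ ≤ ∑ _i : Fin n, |κ 0| :=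
          Finset.sum_le_sum fun i _ => two_mul_succ_mul_abs_tail_le hκ i
      _ = n * |κ 0| := by simp
      _ ≤ ((n : ℤ) + 1) * |κ 0| := by gcongr; linarith
  exact le_of_mul_le_mul_left scaled (by positivity)

lemma abs_le_two_mul_abs_zero (hκ : κ ∈ NRSet (n + 1) n.succ_pos k) : |k| ≤ 2 * |κ 0| := by
  have hk : k = κ 0 - altSum n (Fin.tail κ) := hκ.1.symm.trans (altSum_succ κ)
  have := abs_sub (κ 0) (altSum n (Fin.tail κ))
  rw [← hk] at this
  linarith [two_mul_abs_altSum_tail_le hκ, abs_nonneg (κ 0)]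

lemma abs_zero_le_two_mul_abs (hκ : κ ∈ NRSet (n + 1) n.succ_pos k) : |κ 0| ≤ 2 * |k| := by
  have hk : k = κ 0 - altSum n (Fin.tail κ) := hκ.1.symm.trans (altSum_succ κ)
  have := abs_sub_abs_le_abs_sub (κ 0) (altSum n (Fin.tail κ))
  rw [← hk] at this
  linarith [two_mul_abs_altSum_tail_le hκ]

lemma abs_tail_le_abs (hκ : κ ∈ NRSet (n + 1) n.succ_pos k) (i : Fin n) :
    |Fin.tail κ i| ≤ |k| := by
  nlinarith [two_mul_succ_mul_abs_tail_le hκ i, abs_zero_le_two_mul_abs hκ,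
    abs_nonneg (Fin.tail κ i), mul_nonneg n.cast_nonneg (abs_nonneg (Fin.tail κ i))]

lemma mapsTo_tail (n : ℕ) (k : ℤ) :
    Set.MapsTo Fin.tail (NRSet (n + 1) n.succ_pos k)
      (Fintype.piFinset fun _ : Fin n => Finset.Icc (-|k|) |k|) := by
  intro κ hκ
  rw [Finset.mem_coe, Fintype.mem_piFinset]
  exact fun i => Finset.mem_Icc.2 (abs_le.1 (abs_tail_le_abs hκ i))

lemma injOn_tail (n : ℕ) (k : ℤ) : Set.InjOn Fin.tail (NRSet (n + 1) n.succ_pos k) := by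
  intro κ hκ κ' hκ' htail
  have hsum : altSum (n + 1) κ = altSum (n + 1) κ' := hκ.1.trans hκ'.1.symm
  rw [altSum_succ, altSum_succ, htail, sub_left_inj] at hsum
  rw [← Fin.cons_self_tail κ, ← Fin.cons_self_tail κ', hsum, htail]

lemma finite (n : ℕ) (k : ℤ) : (NRSet (n + 1) n.succ_pos k).Finite :=
  Set.Finite.of_injOn (mapsTo_tail n k) (injOn_tail n k) (Finset.finite_toSet _)

lemma one_add_sq_rpow_le (hκ : κ ∈ NRSet (n + 1) n.succ_pos k) (s : ℝ) :
    (1 + (k : ℝ) ^ 2) ^ s ≤ 4 ^ |s| * (1 + (κ 0 : ℝ) ^ 2) ^ s := by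
  have one_add_sq_le {a b : ℤ} (h : |a| ≤ 2 * |b|) : 1 + (a : ℝ) ^ 2 ≤ 4 * (1 + (b : ℝ) ^ 2) := by
    have : a ^ 2 ≤ (2 * b) ^ 2 := sq_le_sq.2 (by simpa [abs_mul] using h)
    have : (a : ℝ) ^ 2 ≤ (2 * b) ^ 2 := by exact_mod_cast this
    linarith
  exact rpow_le_rpow_abs_mul_rpow (by positivity) (by positivity) (by norm_num)
    (one_add_sq_le (abs_le_two_mul_abs_zero hκ)) (one_add_sq_le (abs_zero_le_two_mul_abs hκ)) s

end NRSet

/-- The summand `⟨k⟩^{2s+2ε} / (Φ² ∏ ⟨k_i⟩^{2s})` of the Cauchy–Schwarz sum bounding the normal-form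
operator. Brackets enter through `⟨x⟩² = 1 + x²`, which halves the exponents. -/
noncomputable def normalFormWeight (p : ℕ) (s ε : ℝ) (k : ℤ) (κ : Fin p → ℤ) : ℝ :=
  (1 + (k : ℝ) ^ 2) ^ (s + ε) /
    (((k ^ 2 - altSq p κ : ℤ) : ℝ) ^ 2 * ∏ i : Fin p, (1 + (κ i : ℝ) ^ 2) ^ s)

lemma normalFormWeight_le {n : ℕ} {k : ℤ} {κ : Fin (n + 1) → ℤ}
    (hκ : κ ∈ NRSet (n + 1) n.succ_pos k) (s ε : ℝ) :
    normalFormWeight (n + 1) s ε k κ ≤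
      2 * 4 ^ |s| * (1 + (k : ℝ) ^ 2) ^ (ε - 1) *
        ∏ i : Fin n, (1 + (Fin.tail κ i : ℝ) ^ 2) ^ (-s) := by
  set K : ℝ := 1 + (k : ℝ) ^ 2
  set P : ℝ := ∏ i : Fin n, (1 + (Fin.tail κ i : ℝ) ^ 2) ^ s
  have hK0 : 0 < K := by positivity
  have hP0 : 0 < P := Finset.prod_pos fun i _ => by positivity
  have phase_bound : K / 2 ≤ ((k ^ 2 - altSq (n + 1) κ : ℤ) : ℝ) ^ 2 := by
    rw [div_le_iff₀' two_pos]
    simp only [K]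
    exact_mod_cast NRSet.one_add_sq_le_two_mul_sq hκ
  have head_bound : K ^ s / 4 ^ |s| ≤ (1 + (κ 0 : ℝ) ^ 2) ^ s :=
    (div_le_iff₀' (by positivity)).2 (NRSet.one_add_sq_rpow_le hκ s)
  have prod_neg : ∏ i : Fin n, (1 + (Fin.tail κ i : ℝ) ^ 2) ^ (-s) = P⁻¹ := by
    rw [← Finset.prod_inv_distrib]
    exact Finset.prod_congr rfl fun i _ => Real.rpow_neg (by positivity) s
  calc normalFormWeight (n + 1) s ε k κ
      = K ^ (s + ε) / (((k ^ 2 - altSq (n + 1) κ : ℤ) : ℝ) ^ 2 *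
          ((1 + (κ 0 : ℝ) ^ 2) ^ s * P)) := by
        rw [normalFormWeight, Fin.prod_univ_succ]
        rfl
    _ ≤ K ^ (s + ε) / (K / 2 * (K ^ s / 4 ^ |s| * P)) := by gcongr
    _ = 2 * 4 ^ |s| * K ^ (ε - 1) * P⁻¹ := by
        rw [Real.rpow_add hK0, Real.rpow_sub_one hK0.ne']
        field_simp
    _ = 2 * 4 ^ |s| * K ^ (ε - 1) *
          ∏ i : Fin n, (1 + (Fin.tail κ i : ℝ) ^ 2) ^ (-s) := by rw [prod_neg]

lemma tsum_normalFormWeight_le {n : ℕ} {s ε b : ℝ} (hb : 0 < b) (hsb : -s ≤ b - 1 / 2)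
    (hbε : n * b ≤ 1 - ε) (k : ℤ) :
    ∑' κ : NRSet (n + 1) n.succ_pos k, normalFormWeight (n + 1) s ε k κ ≤
      2 * 4 ^ |s| * (4 / min b 1) ^ n := by
  set K : ℝ := 1 + (k : ℝ) ^ 2
  have hK0 : 0 < K := by positivity
  have hc : 0 < min b 1 := lt_min hb one_pos
  calc ∑' κ : NRSet (n + 1) n.succ_pos k, normalFormWeight (n + 1) s ε k κ
      ≤ ∑ y ∈ Fintype.piFinset fun _ : Fin n => Finset.Icc (-|k|) |k|,
          2 * 4 ^ |s| * K ^ (ε - 1) * ∏ i, (1 + (y i : ℝ) ^ 2) ^ (-s) :=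
        tsum_le_sum_of_injOn (NRSet.mapsTo_tail n k) (NRSet.injOn_tail n k)
          (fun _ _ => by positivity) fun _ hκ => normalFormWeight_le hκ s ε
    _ = 2 * 4 ^ |s| * K ^ (ε - 1) *
          (∑ y ∈ Finset.Icc (-|k|) |k|, (1 + (y : ℝ) ^ 2) ^ (-s)) ^ n := by
        rw [← Finset.mul_sum, Finset.sum_pow']
    _ ≤ 2 * 4 ^ |s| * K ^ (ε - 1) * (4 / min b 1 * K ^ b) ^ n := by
        gcongr
        exact sum_Icc_one_add_sq_rpow_le hb hsb k
    _ = 2 * 4 ^ |s| * (4 / min b 1) ^ n * K ^ (ε - 1 + b * n) := by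
        rw [mul_pow, Real.rpow_add hK0, Real.rpow_mul_natCast hK0.le]
        ring
    _ ≤ 2 * 4 ^ |s| * (4 / min b 1) ^ n :=
        mul_le_of_le_one_right (by positivity)
          (Real.rpow_le_one_of_one_le_of_nonpos (le_add_of_nonneg_right (sq_nonneg _))
            (by linarith))

theorem stmt6_general (p : ℕ) (hp : 0 < p) (s ε : ℝ) (hε1 : ε < 1)
    (hεs : ε ≤ ((p : ℝ) - 1) * s - ((p : ℝ) - 3) / 2) :
    ∃ C : ℝ, ∀ k : ℤ,
      Summable (fun κ : NRSet p hp k => normalFormWeight p s ε k κ)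
      ∧ ∑' κ : NRSet p hp k, normalFormWeight p s ε k κ ≤ C := by
  obtain ⟨n, rfl⟩ := Nat.exists_eq_add_one.2 hp
  push_cast at hεs
  set b : ℝ := max (1 / 2 - s) ((1 - ε) / (n + 1)) with hb
  have b_pos : 0 < b := lt_max_of_lt_right (div_pos (by linarith) (by positivity))
  have b_ge : -s ≤ b - 1 / 2 := by linarith [le_max_left (1 / 2 - s) ((1 - ε) / (n + 1))]
  have b_le : n * b ≤ 1 - ε := by
    rw [hb, mul_max_of_nonneg _ _ n.cast_nonneg, max_le_iff]
    refine ⟨by linarith, ?_⟩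
    rw [mul_div_assoc', div_le_iff₀ (by positivity)]
    linarith
  refine ⟨2 * 4 ^ |s| * (4 / min b 1) ^ n,
    fun k => ⟨?_, tsum_normalFormWeight_le b_pos b_ge b_le k⟩⟩
  have := (NRSet.finite n k).to_subtype
  exact Summable.of_finite

/-- The Cauchy–Schwarz sum controlling the normal-form operator `T` with symbol `1/Φ` is
bounded uniformly in the external frequency `k`:
`sup_k Σ_{S_k} ⟨k⟩^{2s+2ε} / (Φ² ∏ ⟨k_i⟩^{2s}) < ∞`. -/
theorem stmt6 (p : ℕ) (hp : Odd p) (hp5 : 5 ≤ p) (s ε : ℝ)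
    (hs : s > ((p:ℝ) - 3) / (2 * ((p:ℝ) - 1)))
    (hε0 : 0 < ε)
    (hε : ε < min (((p:ℝ) - 1) * s - ((p:ℝ) - 3) / 2) 1) :
    ∃ C : ℝ, ∀ k : ℤ,
      Summable (fun κ : NRSet p (by omega) k =>
        (1 + (k:ℝ)^2) ^ (s + ε) /
          (((k^2 - altSq p κ.1 : ℤ) : ℝ)^2 * ∏ i : Fin p, (1 + ((κ.1 i : ℝ))^2) ^ s))
      ∧ (∑' κ : NRSet p (by omega) k,
          (1 + (k:ℝ)^2) ^ (s + ε) /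
            (((k^2 - altSq p κ.1 : ℤ) : ℝ)^2 * ∏ i : Fin p, (1 + ((κ.1 i : ℝ))^2) ^ s)) ≤ C := by
  have ⟨hεs, hε1⟩ := lt_min_iff.1 hε
  exact stmt6_general p (by omega) s ε hε1 hεs.le
end

section
/- Let p > 1 be odd, γ ∈ ℝ, let f : ℝ → ℂ be continuously differentiable and 2π-periodic, and let u = u(t,x) be a smooth function, 2π-periodic in x, satisfying i∂ₜu + ∂ₓ²u − |u|^{p−1}u + iγu = f(x) pointwise. Define the energy E(t) := (1/2)∫₀^{2π} |∂ₓu(t,x)|² dx + (1/(p+1))∫₀^{2π} |u(t,x)|^{p+1} dx. Then for every t: E'(t) = −γ ( ∫₀^{2π} |∂ₓu(t,x)|² dx + ∫₀^{2π} |u(t,x)|^{p+1} dx ) + ∫₀^{2π} Im( f'(x) · conj(∂ₓu(t,x)) ) dx + ∫₀^{2π} Im( f(x) · |u(t,x)|^{p−1} · conj(u(t,x)) ) dx. -/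
open scoped BigOperators

/-!
Write `H` for the energy and `N(u) = |u|^(p-1) u`, so that the first variation of `H` at `u` is
`dH(u)·v = ∫ ⟪∂ₓu, ∂ₓv⟫ + ⟪N(u), v⟫`. Putting `v = ∂ₜu + γ u + i f`, the equation says
`i v = N(u) - ∂ₓ²u`, and integrating by parts over a period shows that this is the `L²`-gradient of
`H` at `u`. Hence `dH(u)·v = ∫ ⟪i v, v⟫ = 0`, and by linearity
`dH(u)·∂ₜu = -γ dH(u)·u - dH(u)·(i f)`. Of `N` only its being a continuous gradient matters.
-/

open Complex Function intervalIntegral MeasureTheory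
open scoped RealInnerProductSpace

section PartialDerivatives

variable {𝕜 F : Type*} [NontriviallyNormedField 𝕜] [NormedAddCommGroup F] [NormedSpace 𝕜 F]
  {u : 𝕜 → 𝕜 → F} {m n : WithTop ℕ∞} {t x : 𝕜}

theorem periodic_deriv {g : 𝕜 → F} {c : 𝕜} (hg : Periodic g c) : Periodic (deriv g) c := fun x => by
  rw [← deriv_comp_add_const, hg.funext]

theorem contDiff_deriv_left (hu : ContDiff 𝕜 n (uncurry u)) (hmn : m + 1 ≤ n) :
    ContDiff 𝕜 m fun q : 𝕜 × 𝕜 => deriv (fun r => u r q.2) q.1 := by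
  have hswap : ContDiff 𝕜 n (uncurry fun (q : 𝕜 × 𝕜) r => u r q.2) :=
    hu.comp (contDiff_snd.prodMk (contDiff_snd.comp contDiff_fst))
  exact hswap.fderiv_apply contDiff_fst contDiff_const hmn

theorem contDiff_deriv_right (hu : ContDiff 𝕜 n (uncurry u)) (hmn : m + 1 ≤ n) :
    ContDiff 𝕜 m fun q : 𝕜 × 𝕜 => deriv (u q.1) q.2 := by
  have hfst : ContDiff 𝕜 n (uncurry fun (q : 𝕜 × 𝕜) y => u q.1 y) :=
    hu.comp ((contDiff_fst.comp contDiff_fst).prodMk contDiff_snd)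
  exact hfst.fderiv_apply contDiff_snd contDiff_const hmn

theorem deriv_left_eq_fderiv_uncurry (hu : DifferentiableAt 𝕜 (uncurry u) (t, x)) :
    deriv (fun r => u r x) t = fderiv 𝕜 (uncurry u) (t, x) (1, 0) :=
  (hu.hasFDerivAt.comp_hasDerivAt (f := (·, x)) t
    ((hasDerivAt_id t).prodMk (hasDerivAt_const t x))).deriv

theorem deriv_right_eq_fderiv_uncurry (hu : DifferentiableAt 𝕜 (uncurry u) (t, x)) :
    deriv (u t) x = fderiv 𝕜 (uncurry u) (t, x) (0, 1) :=
  (hu.hasFDerivAt.comp_hasDerivAt x ((hasDerivAt_const x t).prodMk (hasDerivAt_id x))).deriv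

end PartialDerivatives

theorem deriv_deriv_comm {𝕜 F : Type*} [RCLike 𝕜] [NormedAddCommGroup F] [NormedSpace 𝕜 F]
    {u : 𝕜 → 𝕜 → F} (hu : ContDiff 𝕜 2 (uncurry u)) (t x : 𝕜) :
    deriv (fun r => deriv (u r) x) t = deriv (fun y => deriv (fun r => u r y) t) x := by
  have hdiff : Differentiable 𝕜 (uncurry u) := hu.differentiable two_ne_zero
  have hdiff' : DifferentiableAt 𝕜 (fderiv 𝕜 (uncurry u)) (t, x) :=
    (hu.fderiv_right (m := 1) one_add_one_eq_two.le).differentiable one_ne_zero _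
  have hsymm : IsSymmSndFDerivAt 𝕜 (uncurry u) (t, x) :=
    hu.contDiffAt.isSymmSndFDerivAt (by simp)
  have hright : (uncurry fun r y => deriv (u r) y) = fun q => fderiv 𝕜 (uncurry u) q (0, 1) :=
    funext fun q => deriv_right_eq_fderiv_uncurry (hdiff q)
  have hleft : (uncurry fun r y => deriv (fun r' => u r' y) r) =
      fun q => fderiv 𝕜 (uncurry u) q (1, 0) :=
    funext fun q => deriv_left_eq_fderiv_uncurry (hdiff q)
  calc deriv (fun r => deriv (u r) x) t
      = fderiv 𝕜 (fun q => fderiv 𝕜 (uncurry u) q (0, 1)) (t, x) (1, 0) := by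
        rw [← hright]
        exact deriv_left_eq_fderiv_uncurry (hright ▸ hdiff'.clm_apply (by fun_prop))
    _ = fderiv 𝕜 (fderiv 𝕜 (uncurry u)) (t, x) (1, 0) (0, 1) := by
        simp [fderiv_clm_apply hdiff' (differentiableAt_const _)]
    _ = fderiv 𝕜 (fderiv 𝕜 (uncurry u)) (t, x) (0, 1) (1, 0) := hsymm _ _
    _ = fderiv 𝕜 (fun q => fderiv 𝕜 (uncurry u) q (1, 0)) (t, x) (0, 1) := by
        simp [fderiv_clm_apply hdiff' (differentiableAt_const _)]
    _ = deriv (fun y => deriv (fun r => u r y) t) x := by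
        rw [← hleft]
        exact (deriv_right_eq_fderiv_uncurry (u := fun r y => deriv (fun r' => u r' y) r)
          (hleft ▸ hdiff'.clm_apply (by fun_prop))).symm

theorem hasDerivAt_intervalIntegral_of_continuous {F : Type*} [NormedAddCommGroup F]
    [NormedSpace ℝ F] {g g' : ℝ → ℝ → F} (hg : ∀ r, Continuous (g r))
    (hg' : Continuous (uncurry g')) (hderiv : ∀ r x, HasDerivAt (fun r => g r x) (g' r x) r)
    (a b t : ℝ) : HasDerivAt (fun r => ∫ x in a..b, g r x) (∫ x in a..b, g' t x) t := by
  obtain ⟨C, hC⟩ := ((isCompact_closedBall t 1).prod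
    (isCompact_uIcc (a := a) (b := b))).exists_bound_of_continuousOn hg'.continuousOn
  refine (hasDerivAt_integral_of_dominated_loc_of_deriv_le (bound := fun _ => C)
    (Metric.closedBall_mem_nhds t one_pos) (.of_forall fun r => (hg r).aestronglyMeasurable)
    ((hg t).intervalIntegrable a b) (hg'.uncurry_left t).aestronglyMeasurable
    (.of_forall fun x hx r hr => hC (r, x) ⟨hr, Set.uIoc_subset_uIcc hx⟩)
    intervalIntegrable_const (.of_forall fun x _ r _ => hderiv r x)).2

section Energy

variable {E : Type*} [NormedAddCommGroup E] [InnerProductSpace ℝ E]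

/-- The energy `½ ∫₀ᴸ |w'|² + ∫₀ᴸ V(w)` of a field `w` with potential `V`. -/
noncomputable def fieldEnergy (L : ℝ) (V : E → ℝ) (w : ℝ → E) : ℝ :=
  (1 / 2) * (∫ x in 0..L, ‖deriv w x‖ ^ 2) + ∫ x in 0..L, V (w x)

/-- The first variation `∫₀ᴸ ⟪w', v'⟫ + ∫₀ᴸ ⟪N(w), v⟫` of `fieldEnergy L V` at `w` in the
direction `v`, where `N` is the gradient of `V`. -/
noncomputable def firstVariation (L : ℝ) (N : E → E) (w v : ℝ → E) : ℝ :=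
  (∫ x in 0..L, ⟪deriv w x, deriv v x⟫) + ∫ x in 0..L, ⟪N (w x), v x⟫

variable {L : ℝ} {V : E → ℝ} {N : E → E} {w v v₁ v₂ : ℝ → E}

theorem hasDerivAt_fieldEnergy [CompleteSpace E] (hV : ∀ z, HasGradientAt V (N z) z)
    (hN : Continuous N) {u : ℝ → ℝ → E} (hu : ContDiff ℝ 2 (uncurry u)) (t : ℝ) :
    HasDerivAt (fun r => fieldEnergy L V (u r))
      (firstVariation L N (u t) fun x => deriv (fun r => u r x) t) t := by
  have hux : ContDiff ℝ 1 fun q : ℝ × ℝ => deriv (u q.1) q.2 :=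
    contDiff_deriv_right hu one_add_one_eq_two.le
  have hut : ContDiff ℝ 1 fun q : ℝ × ℝ => deriv (fun r => u r q.2) q.1 :=
    contDiff_deriv_left hu one_add_one_eq_two.le
  have huxt : Continuous fun q : ℝ × ℝ => deriv (fun r => deriv (u r) q.2) q.1 :=
    (contDiff_deriv_left (u := fun r y => deriv (u r) y) hux (zero_add 1).le).continuous
  have hcu : Continuous (uncurry u) := hu.continuous
  have hcV : Continuous V := continuous_iff_continuousAt.2 fun z => (hV z).continuousAt
  have hkin := hasDerivAt_intervalIntegral_of_continuous (g := fun r x => ‖deriv (u r) x‖ ^ 2)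
    (g' := fun r x => 2 * ⟪deriv (u r) x, deriv (fun r => deriv (u r) x) r⟫)
    (fun r => (hux.continuous.comp (.prodMk_right r)).norm.pow 2)
    (continuous_const.mul (hux.continuous.inner huxt))
    (fun r x => HasDerivAt.norm_sq (DifferentiableAt.hasDerivAt <|
      (hux.comp (contDiff_id.prodMk contDiff_const)).differentiable one_ne_zero r)) 0 L t
  have hpot := hasDerivAt_intervalIntegral_of_continuous (g := fun r x => V (u r x))
    (g' := fun r x => ⟪N (u r x), deriv (fun r => u r x) r⟫)
    (fun r => hcV.comp (hcu.uncurry_left r))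
    ((hN.comp hcu).inner hut.continuous)
    (fun r x => by
      have hur : DifferentiableAt ℝ (fun r => u r x) r :=
        (hu.comp (contDiff_id.prodMk contDiff_const)).differentiable two_ne_zero r
      simpa [comp_def] using (hV (u r x)).hasFDerivAt.comp_hasDerivAt r hur.hasDerivAt) 0 L t
  refine ((hkin.const_mul (1 / 2)).add hpot).congr_deriv ?_
  simp only [firstVariation, deriv_deriv_comm hu, intervalIntegral.integral_const_mul]
  ring

theorem firstVariation_add (hN : Continuous N) (hw : ContDiff ℝ 1 w) (hv₁ : ContDiff ℝ 1 v₁)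
    (hv₂ : ContDiff ℝ 1 v₂) :
    firstVariation L N w (fun x => v₁ x + v₂ x) =
      firstVariation L N w v₁ + firstVariation L N w v₂ := by
  have hw' : Continuous (deriv w) := hw.continuous_deriv le_rfl
  have hderiv : (deriv fun x => v₁ x + v₂ x) = fun x => deriv v₁ x + deriv v₂ x :=
    funext fun x => deriv_fun_add (hv₁.differentiable one_ne_zero x)
      (hv₂.differentiable one_ne_zero x)
  have hkin {v : ℝ → E} (hv : ContDiff ℝ 1 v) :
      IntervalIntegrable (fun x => ⟪deriv w x, deriv v x⟫) volume 0 L :=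
    (hw'.inner (hv.continuous_deriv le_rfl)).intervalIntegrable 0 L
  have hpot {v : ℝ → E} (hv : ContDiff ℝ 1 v) :
      IntervalIntegrable (fun x => ⟪N (w x), v x⟫) volume 0 L :=
    ((hN.comp hw.continuous).inner hv.continuous).intervalIntegrable 0 L
  simp only [firstVariation, hderiv, inner_add_right, integral_add (hkin hv₁) (hkin hv₂),
    integral_add (hpot hv₁) (hpot hv₂)]
  ring

theorem firstVariation_smul (c : ℝ) :
    firstVariation L N w (fun x => c • v x) = c * firstVariation L N w v := by
  simp only [firstVariation, deriv_fun_const_smul_field, real_inner_smul_right,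
    intervalIntegral.integral_const_mul, mul_add]

theorem firstVariation_self :
    firstVariation L N w w = (∫ x in 0..L, ‖deriv w x‖ ^ 2) + ∫ x in 0..L, ⟪N (w x), w x⟫ := by
  simp only [firstVariation, real_inner_self_eq_norm_sq]

theorem firstVariation_eq_integral_inner (hN : Continuous N) (hw : ContDiff ℝ 2 w)
    (hv : ContDiff ℝ 1 v) (hwL : Periodic w L) (hvL : Periodic v L) :
    firstVariation L N w v = ∫ x in 0..L, ⟪N (w x) - deriv (deriv w) x, v x⟫ := by
  have hw' : ContDiff ℝ 1 (deriv w) := hw.deriv'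
  have hw'' : Continuous (deriv (deriv w)) := hw'.continuous_deriv le_rfl
  have hkin : Continuous fun x => ⟪deriv w x, deriv v x⟫ :=
    hw'.continuous.inner (hv.continuous_deriv le_rfl)
  have hlap : Continuous fun x => ⟪deriv (deriv w) x, v x⟫ := hw''.inner hv.continuous
  have hpot : Continuous fun x => ⟪N (w x), v x⟫ :=
    (hN.comp hw.continuous).inner hv.continuous
  have hparts : (∫ x in 0..L, (⟪deriv w x, deriv v x⟫ + ⟪deriv (deriv w) x, v x⟫)) = 0 := by
    rw [integral_eq_sub_of_hasDerivAt
      (fun x _ => ((hw'.differentiable one_ne_zero x).hasDerivAt).inner ℝ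
        ((hv.differentiable one_ne_zero x).hasDerivAt))
      ((hkin.add hlap).intervalIntegrable 0 L), (periodic_deriv hwL).eq, hvL.eq, sub_self]
  rw [integral_add (hkin.intervalIntegrable 0 L) (hlap.intervalIntegrable 0 L)] at hparts
  simp only [firstVariation, inner_sub_left]
  rw [integral_sub (hpot.intervalIntegrable 0 L) (hlap.intervalIntegrable 0 L)]
  linarith

end Energy

theorem real_inner_I_mul_self (z : ℂ) : ⟪I * z, z⟫ = 0 := by
  simp [Complex.inner, mul_comm]

theorem firstVariation_eq_zero_of_I_mul_eq {L : ℝ} {N : ℂ → ℂ} {w v : ℝ → ℂ}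
    (hN : Continuous N) (hw : ContDiff ℝ 2 w) (hv : ContDiff ℝ 1 v) (hwL : Periodic w L)
    (hIv : ∀ x, I * v x = N (w x) - deriv (deriv w) x) : firstVariation L N w v = 0 := by
  have hvL : Periodic v L := fun x => mul_left_cancel₀ I_ne_zero <| by
    rw [hIv, hIv, hwL, periodic_deriv (periodic_deriv hwL)]
  simp only [firstVariation_eq_integral_inner hN hw hv hwL hvL, ← hIv, real_inner_I_mul_self,
    intervalIntegral.integral_zero]

theorem firstVariation_I_mul (L : ℝ) (N : ℂ → ℂ) (w f : ℝ → ℂ) :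
    firstVariation L N w (fun x => I * f x) =
      -(∫ x in 0..L, (deriv f x * (starRingEnd ℂ) (deriv w x)).im)
        - ∫ x in 0..L, (f x * (starRingEnd ℂ) (N (w x))).im := by
  have inner_I_mul (z ζ : ℂ) : ⟪z, I * ζ⟫ = -(ζ * (starRingEnd ℂ) z).im := by
    simp [Complex.inner]
  simp only [firstVariation, deriv_const_mul_field, inner_I_mul, intervalIntegral.integral_neg,
    sub_eq_add_neg]

theorem hasDerivAt_fieldEnergy_of_forced_damped_nls {L γ t : ℝ} {V : ℂ → ℝ} {N : ℂ → ℂ}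
    {f : ℝ → ℂ} {u : ℝ → ℝ → ℂ} (hV : ∀ z, HasGradientAt V (N z) z) (hN : Continuous N)
    (hf : ContDiff ℝ 1 f) (hu : ContDiff ℝ 2 (uncurry u)) (hper : Periodic (u t) L)
    (heq : ∀ x, I * deriv (fun r => u r x) t + deriv (deriv (u t)) x - N (u t x)
      + I * γ * u t x = f x) :
    HasDerivAt (fun r => fieldEnergy L V (u r))
      (-γ * ((∫ x in 0..L, ‖deriv (u t) x‖ ^ 2) + ∫ x in 0..L, ⟪N (u t x), u t x⟫)
        + (∫ x in 0..L, (deriv f x * (starRingEnd ℂ) (deriv (u t) x)).im)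
        + ∫ x in 0..L, (f x * (starRingEnd ℂ) (N (u t x))).im) t := by
  have hut : ContDiff ℝ 1 fun x => deriv (fun r => u r x) t :=
    (contDiff_deriv_left hu one_add_one_eq_two.le).comp (contDiff_const.prodMk contDiff_id)
  have hw : ContDiff ℝ 2 (u t) := hu.comp (contDiff_const.prodMk contDiff_id)
  have hw₁ : ContDiff ℝ 1 (u t) := hw.of_le one_le_two
  have hγu : ContDiff ℝ 1 fun x => γ • u t x := hw₁.const_smul γ
  have hIf : ContDiff ℝ 1 fun x => I * f x := contDiff_const.mul hf
  have hzero : firstVariation L N (u t)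
      (fun x => deriv (fun r => u r x) t + γ • u t x + I * f x) = 0 := by
    refine firstVariation_eq_zero_of_I_mul_eq hN hw ((hut.add hγu).add hIf) hper fun x => ?_
    rw [real_smul]
    linear_combination heq x + f x * I_sq
  rw [firstVariation_add hN hw₁ (hut.add hγu) hIf, firstVariation_add hN hw₁ hut hγu,
    firstVariation_smul, firstVariation_self, firstVariation_I_mul] at hzero
  exact (hasDerivAt_fieldEnergy hV hN hu t).congr_deriv (by linarith)

section PowerNonlinearity

variable {E : Type*} [NormedAddCommGroup E] [InnerProductSpace ℝ E] [CompleteSpace E] {p : ℝ}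

-- For `p < 1` the value `0 ^ (p - 1) = 0` is immaterial: it only multiplies the vector `0`.
theorem hasGradientAt_const_mul_norm_rpow (hp : 0 < p) (z : E) :
    HasGradientAt (fun z : E => 1 / (p + 1) * ‖z‖ ^ (p + 1)) (‖z‖ ^ (p - 1) • z) z := by
  rw [hasGradientAt_iff_hasFDerivAt]
  refine ((hasFDerivAt_norm_rpow z (lt_add_of_pos_left 1 hp)).const_mul _).congr_fderiv ?_
  ext y
  have hexp : p + 1 - 2 = p - 1 := by ring
  have hp' : p + 1 ≠ 0 := by positivity
  simp only [hexp, smul_apply, coe_innerSL_apply, smul_eq_mul, map_smul,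
    InnerProductSpace.toDual_apply_apply]
  field_simp

theorem continuous_norm_rpow_smul (hp : 0 < p) : Continuous fun z : E => ‖z‖ ^ (p - 1) • z := by
  have hgrad : (fun z : E => ‖z‖ ^ (p - 1) • z) =
      gradient fun z : E => 1 / (p + 1) * ‖z‖ ^ (p + 1) :=
    funext fun z => (hasGradientAt_const_mul_norm_rpow hp z).gradient.symm
  rw [hgrad]
  exact (InnerProductSpace.toDual ℝ E).symm.continuous.comp
    ((contDiff_const.mul (contDiff_norm_rpow (lt_add_of_pos_left 1 hp))).continuous_fderiv
      one_ne_zero)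

end PowerNonlinearity

theorem stmt12_general {p L γ t : ℝ} (hp : 0 < p) {f : ℝ → ℂ} (hf : ContDiff ℝ 1 f)
    {u : ℝ → ℝ → ℂ} (hu : ContDiff ℝ 2 (uncurry u)) (hper : Periodic (u t) L)
    (heq : ∀ x, I * deriv (fun r => u r x) t + deriv (deriv (u t)) x
      - (‖u t x‖ ^ (p - 1) : ℝ) * u t x + I * γ * u t x = f x) :
    HasDerivAt
      (fun r => (1 / 2) * (∫ x in 0..L, ‖deriv (u r) x‖ ^ 2)
        + (1 / (p + 1)) * ∫ x in 0..L, ‖u r x‖ ^ (p + 1))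
      (-γ * ((∫ x in 0..L, ‖deriv (u t) x‖ ^ 2) + ∫ x in 0..L, ‖u t x‖ ^ (p + 1))
        + (∫ x in 0..L, (deriv f x * (starRingEnd ℂ) (deriv (u t) x)).im)
        + ∫ x in 0..L, (f x * (‖u t x‖ ^ (p - 1) : ℝ) * (starRingEnd ℂ) (u t x)).im) t := by
  have hinner (z : ℂ) : ⟪(‖z‖ ^ (p - 1) : ℝ) * z, z⟫ = ‖z‖ ^ (p + 1) := by
    rw [← real_smul, real_inner_smul_left, real_inner_self_eq_norm_sq, ← Real.rpow_natCast,
      ← Real.rpow_add' (norm_nonneg z) (by push_cast; linarith)]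
    push_cast
    ring_nf
  have h := hasDerivAt_fieldEnergy_of_forced_damped_nls (hasGradientAt_const_mul_norm_rpow hp)
    (continuous_norm_rpow_smul hp) hf hu hper heq
  simpa only [fieldEnergy, intervalIntegral.integral_const_mul, hinner, real_smul, map_mul,
    conj_ofReal, mul_assoc] using h

/-- Energy identity for the periodic forced–damped defocusing p-NLS:
`E'(t) = −γ(∫|∂ₓu|² + ∫|u|^{p+1}) + ∫ Im(f' conj ∂ₓu) + ∫ Im(f |u|^{p−1} conj u)`,
where `E(t) = ½∫|∂ₓu|² + (1/(p+1))∫|u|^{p+1}`. -/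
theorem stmt12 (p : ℕ) (hp : Odd p) (hp1 : 1 < p) (γ : ℝ)
    (f : ℝ → ℂ) (hf : ContDiff ℝ 1 f) (hfper : Function.Periodic f (2 * Real.pi))
    (u : ℝ → ℝ → ℂ)
    (hsmooth : ContDiff ℝ (⊤ : ℕ∞) (fun q : ℝ × ℝ => u q.1 q.2))
    (hper : ∀ t x : ℝ, u t (x + 2 * Real.pi) = u t x)
    (heq : ∀ t x : ℝ,
      Complex.I * deriv (fun r => u r x) t
        + deriv (deriv (fun y => u t y)) x
        - (‖u t x‖ : ℂ) ^ (p - 1) * u t x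
        + Complex.I * (γ : ℂ) * u t x = f x) :
    ∀ t : ℝ, HasDerivAt
      (fun r => (1/2) * (∫ x in (0:ℝ)..(2 * Real.pi), ‖deriv (fun y => u r y) x‖^2)
        + (1/((p:ℝ) + 1)) * ∫ x in (0:ℝ)..(2 * Real.pi), ‖u r x‖^(p+1))
      (-γ * ((∫ x in (0:ℝ)..(2 * Real.pi), ‖deriv (fun y => u t y) x‖^2)
            + ∫ x in (0:ℝ)..(2 * Real.pi), ‖u t x‖^(p+1))
        + (∫ x in (0:ℝ)..(2 * Real.pi),
            (deriv f x * (starRingEnd ℂ) (deriv (fun y => u t y) x)).im)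
        + ∫ x in (0:ℝ)..(2 * Real.pi),
            (f x * (‖u t x‖ : ℂ)^(p-1) * (starRingEnd ℂ) (u t x)).im) t := by
  intro t
  have hpred (r : ℝ) : r ^ (p - 1 : ℝ) = r ^ (p - 1) := by
    rw [← Nat.cast_pred (by lia), Real.rpow_natCast]
  have hsucc (r : ℝ) : r ^ (p + 1 : ℝ) = r ^ (p + 1) := mod_cast Real.rpow_natCast r (p + 1)
  simpa only [hpred, hsucc, ofReal_pow] using stmt12_general (p := p) (u := u) (γ := γ)
    (by positivity) hf (contDiff_infty.1 hsmooth 2) (hper t)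
    (by simpa only [hpred, ofReal_pow] using heq t)
end
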